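/- Liouville-type theorem: assume m > 4. Suppose f ∈ C²(ℝ^m×𝔹^m, ℋ_k) is bounded on ℝ^m × 𝔹^m and satisfies 𝒟_k f = 0 in ℝ^m × 𝔹^m. Then f does not depend on the first variable: f(x,ν) = f(0,ν) for all x ∈ ℝ^m and ν ∈ 𝔹^m, so that f coincides with a single element of ℋ_k in the second variable. -/

import Mathlib

noncomputable section

open MeasureTheory Metric Filter Topology
open scoped RealInnerProductSpace

/-- `ℝ^m` as a Euclidean space. -/
abbrev Evec (m : ℕ) : Type := EuclideanSpace ℝ (Fin m)

/-- Partial derivative in the `i`-th coordinate direction. -/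
def pdv {m : ℕ} (i : Fin m) (f : Evec m → ℝ) (x : Evec m) : ℝ :=
  fderiv ℝ f x (EuclideanSpace.single i 1)

/-- Euclidean Laplacian on `ℝ^m`. -/
def lapl {m : ℕ} (f : Evec m → ℝ) (x : Evec m) : ℝ :=
  ∑ i : Fin m, pdv i (pdv i f) x

/-- `p` is a real-valued polynomial function on `ℝ^m`, homogeneous of degree `k` and
harmonic; i.e. `p ∈ ℋ_k`. -/
def IsHk (m k : ℕ) (p : Evec m → ℝ) : Prop :=
  (∃ P : MvPolynomial (Fin m) ℝ, ∀ x : Evec m, p x = MvPolynomial.eval (fun i => x i) P) ∧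
  (∀ (c : ℝ) (x : Evec m), p (c • x) = c ^ k * p x) ∧
  (∀ x : Evec m, lapl p x = 0)

/-- The surface measure `dS` on the unit sphere `𝕊^{m-1}`, as a measure on `ℝ^m`. -/
def sphereM (m : ℕ) : Measure (Evec m) :=
  Measure.map Subtype.val ((volume : Measure (Evec m)).toSphere)

/-- `ω_m`, the surface area of the unit sphere `𝕊^{m-1}`. -/
def omegaS (m : ℕ) : ℝ := (sphereM m Set.univ).toReal

/-- The constant `c_{m,k} = 2(m+2k-2)/((m-2)ω_m)`. -/
def cmk (m k : ℕ) : ℝ := 2 * ((m : ℝ) + 2 * k - 2) / (((m : ℝ) - 2) * omegaS m)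

/-- The reflection `R_a(u) = u - 2⟨a,u⟩a/|a|²` (in Clifford notation `a u a/|a|²`). -/
def reflv {m : ℕ} (a u : Evec m) : Evec m :=
  u - (2 * ⟪a, u⟫ / ‖a‖ ^ 2) • a

/-- `dim ℋ_k`. -/
def hdim (m k : ℕ) : ℕ :=
  Nat.choose (m + k - 1) (m - 1) - Nat.choose (m + k - 3) (m - 1)

/-- `Z` is the reproducing kernel `Z_k` of `ℋ_k` on the unit sphere: a symmetric,
rotation invariant kernel, bounded by `dim ℋ_k` on the unit ball, belonging to `ℋ_k`
in the first variable and reproducing elements of `ℋ_k` from their spherical values. -/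
def IsZk (m k : ℕ) (Z : Evec m → Evec m → ℝ) : Prop :=
  (∀ v : Evec m, IsHk m k (fun u => Z u v)) ∧
  (∀ p : Evec m → ℝ, IsHk m k p → ∀ v : Evec m, (∫ u, Z u v * p u ∂(sphereM m)) = p v) ∧
  (∀ u v : Evec m, Z u v = Z v u) ∧
  (∀ u v : Evec m, ‖u‖ ≤ 1 → ‖v‖ ≤ 1 → |Z u v| ≤ (hdim m k : ℝ)) ∧
  (∀ (A : Evec m ≃ₗᵢ[ℝ] Evec m) (u v : Evec m), Z (A u) (A v) = Z u v)

/-- The point `(x', y) ∈ ℝ^{d+1}` with first `d` coordinates `x'` and last coordinate `y`. -/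
def upP (d : ℕ) (x' : Evec d) (y : ℝ) : Evec (d + 1) :=
  (EuclideanSpace.equiv (Fin (d + 1)) ℝ).symm
    (Fin.snoc (⇑(EuclideanSpace.equiv (Fin d) ℝ) x') y)

/-- The first `d` coordinates of a point of `ℝ^{d+1}`. -/
def downP (d : ℕ) (x : Evec (d + 1)) : Evec d :=
  (EuclideanSpace.equiv (Fin d) ℝ).symm (fun i => x (Fin.castSucc i))

/-- The last coordinate of a point of `ℝ^{d+1}`. -/
def lastP (d : ℕ) (x : Evec (d + 1)) : ℝ := x (Fin.last d)

/-- The Poisson kernel `P_H` for bosonic Laplacians in the upper half-space `ℝ^{d+1}_+`,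
`P_H(x,t,u,v) = c_{m,k} (y/|x-t|^m) Z_k(R_{x-t}(u), v)` with `m = d+1`, `x = (x',y)`,
`t = (t',0)`. -/
def PH (d k : ℕ) (Z : Evec (d + 1) → Evec (d + 1) → ℝ) (x' : Evec d) (y : ℝ)
    (t' : Evec d) (u v : Evec (d + 1)) : ℝ :=
  cmk (d + 1) k * (y / ‖upP d x' y - upP d t' 0‖ ^ (d + 1)) *
    Z (reflv (upP d x' y - upP d t' 0) u) v

/-- The Poisson integral `P_H[f]` in the upper half-space. -/
def PHint (d k : ℕ) (Z : Evec (d + 1) → Evec (d + 1) → ℝ)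
    (f : Evec d → Evec (d + 1) → ℝ) (x' : Evec d) (y : ℝ) (v : Evec (d + 1)) : ℝ :=
  ∫ t' : Evec d, (∫ u, PH d k Z x' y t' u v * f t' u ∂(sphereM (d + 1)))

/-- The Poisson kernel `P_B` for bosonic Laplacians in the unit ball. -/
def PB (m k : ℕ) (Z : Evec m → Evec m → ℝ) (x ζ ω ν : Evec m) : ℝ :=
  (cmk m k / 2) * ((1 - ‖x‖ ^ 2) / ‖x - ζ‖ ^ m) * Z (reflv (x - ζ) ω) ν

/-- The Poisson integral `P_B[h]` in the unit ball. -/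
def PBint (m k : ℕ) (Z : Evec m → Evec m → ℝ) (h : Evec m → Evec m → ℝ)
    (x ν : Evec m) : ℝ :=
  ∫ ζ, (∫ ω, PB m k Z x ζ ω ν * h ζ ω ∂(sphereM m)) ∂(sphereM m)

/-- Partial derivative in the first (`x`) variable. -/
def pd1 {m : ℕ} (i : Fin m) (f : Evec m → Evec m → ℝ) : Evec m → Evec m → ℝ :=
  fun x u => fderiv ℝ (fun x₁ => f x₁ u) x (EuclideanSpace.single i 1)

/-- Partial derivative in the second (`u`) variable. -/
def pd2 {m : ℕ} (i : Fin m) (f : Evec m → Evec m → ℝ) : Evec m → Evec m → ℝ :=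
  fun x u => fderiv ℝ (fun u₁ => f x u₁) u (EuclideanSpace.single i 1)

/-- The bosonic Laplacian `𝒟_k`. -/
def Dk (m k : ℕ) (f : Evec m → Evec m → ℝ) : Evec m → Evec m → ℝ := fun x u =>
  (∑ i : Fin m, pd1 i (pd1 i f) x u)
    - (4 / ((m : ℝ) + 2 * k - 2)) *
        ∑ i : Fin m, ∑ j : Fin m, u i * pd1 i (pd2 j (pd1 j f)) x u
    + (4 * ‖u‖ ^ 2 / (((m : ℝ) + 2 * k - 2) * ((m : ℝ) + 2 * k - 4))) *
        ∑ i : Fin m, ∑ j : Fin m, pd2 i (pd1 i (pd2 j (pd1 j f))) x u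

/-- `f ∈ C²(Ω×𝔹^m, ℋ_k)`: twice continuously differentiable on `Ω × 𝔹^m` and, for each
fixed `x ∈ Ω`, coinciding in the second variable with an element of `ℋ_k`. -/
def C2Hk (m k : ℕ) (Ω : Set (Evec m)) (f : Evec m → Evec m → ℝ) : Prop :=
  ContDiffOn ℝ 2 (fun q : Evec m × Evec m => f q.1 q.2) (Ω ×ˢ ball (0 : Evec m) 1) ∧
  ∀ x ∈ Ω, ∃ q, IsHk m k q ∧ ∀ u ∈ closedBall (0 : Evec m) 1, f x u = q u

/-- The `L^p` norm `(∫_{ℝ^{m-1}} ∫_{𝕊^{m-1}} |f(x',u)|^p dS(u) dx')^{1/p}` (`m = d+1`),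
valued in `ℝ≥0∞`. -/
def lpH (d : ℕ) (p : ℝ) (f : Evec d → Evec (d + 1) → ℝ) : ENNReal :=
  (∫⁻ x' : Evec d, ∫⁻ u, ENNReal.ofReal (|f x' u| ^ p) ∂(sphereM (d + 1))) ^ (1 / p)

/-- `f ∈ L^p(ℝ^{m-1}×𝔹^m, ℋ_k)` (`m = d+1`). -/
def MemLpH (d k : ℕ) (p : ℝ) (f : Evec d → Evec (d + 1) → ℝ) : Prop :=
  Measurable (fun q : Evec d × Evec (d + 1) => f q.1 q.2) ∧
  (∀ x' : Evec d, ∃ q, IsHk (d + 1) k q ∧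
    ∀ u ∈ closedBall (0 : Evec (d + 1)) 1, f x' u = q u) ∧
  lpH d p f < ⊤

/-- The `L^p` norm `(∫_{𝕊^{m-1}} ∫_{𝕊^{m-1}} |h(ζ,ω)|^p dS(ω) dS(ζ))^{1/p}`,
valued in `ℝ≥0∞`. -/
def lpS (m : ℕ) (p : ℝ) (h : Evec m → Evec m → ℝ) : ENNReal :=
  (∫⁻ ζ, ∫⁻ ω, ENNReal.ofReal (|h ζ ω| ^ p) ∂(sphereM m) ∂(sphereM m)) ^ (1 / p)

/-- `h ∈ L^p(𝕊^{m-1}×𝔹^m, ℋ_k)`. -/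
def MemLpS (m k : ℕ) (p : ℝ) (h : Evec m → Evec m → ℝ) : Prop :=
  Measurable (fun q : Evec m × Evec m => h q.1 q.2) ∧
  (∀ ζ : Evec m, ‖ζ‖ = 1 → ∃ q, IsHk m k q ∧
    ∀ ω ∈ closedBall (0 : Evec m) 1, h ζ ω = q ω) ∧
  lpS m p h < ⊤

/-- Iterated partial derivative `D_x^α` in the first variable, for a multi-index `α ∈ ℕ^m`. -/
def Dx {m : ℕ} (α : Fin m → ℕ) (f : Evec m → Evec m → ℝ) : Evec m → Evec m → ℝ :=
  (List.finRange m).foldr (fun i g => (pd1 i)^[α i] g) f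

/-- Iterated partial derivative `D_ν^β` in the second variable, for a multi-index `β ∈ ℕ^m`. -/
def Dv {m : ℕ} (β : Fin m → ℕ) (f : Evec m → Evec m → ℝ) : Evec m → Evec m → ℝ :=
  (List.finRange m).foldr (fun i g => (pd2 i)^[β i] g) f


section Liouville

variable {m : ℕ}

open scoped ContDiff

lemma deriv_deriv_nonpos_of_isLocalMax {h : ℝ → ℝ} {t : ℝ} (hmax : IsLocalMax h t)
    (hc : ContinuousAt h t) : deriv (deriv h) t ≤ 0 := by
  by_contra! hpos
  have hmin : IsLocalMin h t := isLocalMin_of_deriv_deriv_pos hpos hmax.deriv_eq_zero hc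
  have hconst : h =ᶠ[𝓝 t] fun _ => h t := by
    filter_upwards [hmax, hmin] with s h₁ h₂ using le_antisymm h₁ h₂
  have hzero : deriv (deriv h) t = 0 := by
    rw [hconst.deriv.deriv_eq]
    simp
  exact hpos.ne' hzero

lemma deriv_comp_line {g : Evec m → ℝ} (hg : Differentiable ℝ g) (x : Evec m) (i : Fin m)
    (t : ℝ) :
    deriv (fun s : ℝ => g (x + s • EuclideanSpace.single i (1 : ℝ))) t
      = pdv i g (x + t • EuclideanSpace.single i (1 : ℝ)) := by
  have hline : HasDerivAt (fun s : ℝ => x + s • EuclideanSpace.single i (1 : ℝ))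
      (EuclideanSpace.single i (1 : ℝ)) t := by
    simpa using ((hasDerivAt_id t).smul_const (EuclideanSpace.single i (1 : ℝ))).const_add x
  exact ((hg _).hasFDerivAt.comp_hasDerivAt t hline).deriv

lemma ContDiff.pdv {n p : WithTop ℕ∞} {g : Evec m → ℝ} (hg : ContDiff ℝ n g) (hp : p + 1 ≤ n)
    (i : Fin m) : ContDiff ℝ p (_root_.pdv i g) :=
  (hg.fderiv_right hp).clm_apply contDiff_const

lemma pdv_pdv_nonpos_of_isMax {g : Evec m → ℝ} (hg : ContDiff ℝ 2 g) {x : Evec m}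
    (hmax : ∀ y, g y ≤ g x) (i : Fin m) : pdv i (pdv i g) x ≤ 0 := by
  have hg₁ : ContDiff ℝ 1 (pdv i g) := hg.pdv (by norm_num) i
  set h : ℝ → ℝ := fun s => g (x + s • EuclideanSpace.single i (1 : ℝ)) with hh
  have hmax' : IsLocalMax h 0 := Filter.Eventually.of_forall fun s => by simpa [hh] using hmax _
  have hc : ContinuousAt h 0 := by
    have := hg.continuous
    fun_prop
  have hd : deriv h = fun s => pdv i g (x + s • EuclideanSpace.single i (1 : ℝ)) :=
    funext fun t => deriv_comp_line (hg.differentiable (by norm_num)) x i t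
  have := deriv_deriv_nonpos_of_isLocalMax hmax' hc
  rw [hd, deriv_comp_line (hg₁.differentiable (by norm_num)) x i 0] at this
  simpa using this

lemma pdv_add {g h : Evec m → ℝ} (hg : Differentiable ℝ g) (hh : Differentiable ℝ h)
    (i : Fin m) : pdv i (fun x => g x + h x) = fun x => pdv i g x + pdv i h x := by
  funext x
  simp [pdv, fderiv_fun_add (hg x) (hh x)]

lemma pdv_sum {ι : Type*} (s : Finset ι) {g : ι → Evec m → ℝ}
    (hg : ∀ a ∈ s, Differentiable ℝ (g a)) (i : Fin m) :
    pdv i (fun x => ∑ a ∈ s, g a x) = fun x => ∑ a ∈ s, pdv i (g a) x := by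
  funext x
  simp [pdv, fderiv_fun_sum fun a ha => hg a ha x]

lemma pdv_const_mul {g : Evec m → ℝ} (hg : Differentiable ℝ g) (c : ℝ) (i : Fin m) :
    pdv i (fun x => c * g x) = fun x => c * pdv i g x := by
  funext x
  simp [pdv, fderiv_const_mul (hg x)]

lemma pdv_mul {g h : Evec m → ℝ} (hg : Differentiable ℝ g) (hh : Differentiable ℝ h)
    (i : Fin m) : pdv i (fun x => g x * h x) = fun x => g x * pdv i h x + h x * pdv i g x := by
  funext x
  simp [pdv, fderiv_fun_mul (hg x) (hh x)]

lemma pdv_pdv_comm {g : Evec m → ℝ} (hg : ContDiff ℝ 2 g) (i j : Fin m) :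
    pdv i (pdv j g) = pdv j (pdv i g) := by
  funext x
  have hd : DifferentiableAt ℝ (fderiv ℝ g) x :=
    (hg.fderiv_right (m := 1) (by norm_num)).differentiable (by norm_num) x
  have hsymm := (hg.contDiffAt (x := x)).isSymmSndFDerivAt (by simp)
  have key : ∀ v w : Evec m,
      fderiv ℝ (fun y => fderiv ℝ g y v) x w = fderiv ℝ (fderiv ℝ g) x w v := by
    intro v w
    rw [fderiv_clm_apply hd (differentiableAt_const v)]
    simp
  change fderiv ℝ (fun y => fderiv ℝ g y _) x _ = fderiv ℝ (fun y => fderiv ℝ g y _) x _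
  rw [key, key]
  exact hsymm _ _

lemma lapl_add {g h : Evec m → ℝ} (hg : ContDiff ℝ 2 g) (hh : ContDiff ℝ 2 h) (x : Evec m) :
    lapl (fun y => g y + h y) x = lapl g x + lapl h x := by
  simp only [lapl, ← Finset.sum_add_distrib]
  refine Finset.sum_congr rfl fun i _ => ?_
  rw [pdv_add (hg.differentiable (by norm_num)) (hh.differentiable (by norm_num)),
    pdv_add ((hg.pdv (p := 1) (by norm_num) i).differentiable (by norm_num))
      ((hh.pdv (p := 1) (by norm_num) i).differentiable (by norm_num))]

lemma lapl_const_mul {g : Evec m → ℝ} (hg : ContDiff ℝ 2 g) (c : ℝ) (x : Evec m) :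
    lapl (fun y => c * g y) x = c * lapl g x := by
  simp only [lapl, Finset.mul_sum]
  refine Finset.sum_congr rfl fun i _ => ?_
  rw [pdv_const_mul (hg.differentiable (by norm_num)),
    pdv_const_mul ((hg.pdv (p := 1) (by norm_num) i).differentiable (by norm_num))]

lemma lapl_sum {ι : Type*} (s : Finset ι) {g : ι → Evec m → ℝ}
    (hg : ∀ a ∈ s, ContDiff ℝ 2 (g a)) (x : Evec m) :
    lapl (fun y => ∑ a ∈ s, g a y) x = ∑ a ∈ s, lapl (g a) x := by
  simp only [lapl]
  rw [Finset.sum_comm]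
  refine Finset.sum_congr rfl fun i _ => ?_
  rw [pdv_sum s fun a ha => (hg a ha).differentiable (by norm_num),
    pdv_sum s fun a ha => ((hg a ha).pdv (p := 1) (by norm_num) i).differentiable (by norm_num)]

lemma lapl_mul_self {g : Evec m → ℝ} (hg : ContDiff ℝ 2 g) (x : Evec m) :
    lapl (fun y => g y * g y) x = 2 * ∑ i, pdv i g x ^ 2 + 2 * g x * lapl g x := by
  have hd := hg.differentiable (by norm_num)
  simp only [lapl, Finset.mul_sum, ← Finset.sum_add_distrib]
  refine Finset.sum_congr rfl fun i _ => ?_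
  have hd₁ := (hg.pdv (p := 1) (by norm_num) i).differentiable (by norm_num)
  rw [pdv_mul hd hd, pdv_add (hd.fun_mul hd₁) (hd.fun_mul hd₁), pdv_mul hd hd₁]
  ring

lemma lapl_norm_sq (x : Evec m) : lapl (fun y : Evec m => ‖y‖ ^ 2) x = 2 * m := by
  have h₁ : ∀ i : Fin m, pdv i (fun y : Evec m => ‖y‖ ^ 2) = fun y => 2 * y i := by
    intro i
    funext y
    simp [pdv, fderiv_norm_sq_apply, EuclideanSpace.inner_single_right]
  have h₂ : ∀ i : Fin m, pdv i (fun y : Evec m => y i) = fun _ => 1 := by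
    intro i
    funext y
    have : HasFDerivAt (fun y : Evec m => y i) (EuclideanSpace.proj (𝕜 := ℝ) i) y :=
      (EuclideanSpace.proj (𝕜 := ℝ) i).hasFDerivAt
    simp [pdv, this.fderiv]
  have h₃ : ∀ i : Fin m, Differentiable ℝ fun y : Evec m => y i := fun i =>
    (EuclideanSpace.proj (𝕜 := ℝ) i).differentiable
  simp only [lapl, h₁, pdv_const_mul (h₃ _), h₂]
  simp [mul_comm]

/-- Approximate maximum principle: a bounded function `Φ` is, up to a small error, dominated at
the origin by its value at some point where its Laplacian is almost nonpositive. -/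
lemma exists_lapl_le_of_bounded {Φ : Evec m → ℝ} (hΦ : ContDiff ℝ 2 Φ) {B : ℝ}
    (hB : ∀ x, |Φ x| ≤ B) {ε : ℝ} (hε : 0 < ε) (x₀ : Evec m) :
    ∃ x, Φ x₀ ≤ Φ x + ε * ‖x₀‖ ^ 2 ∧ lapl Φ x ≤ ε * (2 * m) := by
  set Ψ : Evec m → ℝ := fun x => Φ x + (-ε) * ‖x‖ ^ 2 with hΨ
  have hN : ContDiff ℝ 2 fun x : Evec m => ‖x‖ ^ 2 := contDiff_norm_sq ℝ
  have hΨ₂ : ContDiff ℝ 2 Ψ := hΦ.add (contDiff_const.mul hN)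
  have hlim : Tendsto Ψ (cocompact (Evec m)) atBot := by
    have h₁ : Tendsto (fun x : Evec m => ‖x‖ ^ 2) (cocompact (Evec m)) atTop :=
      (tendsto_pow_atTop two_ne_zero).comp tendsto_norm_cocompact_atTop
    have h₂ := tendsto_atBot_add_const_left _ B (h₁.const_mul_atTop_of_neg (neg_neg_of_pos hε))
    exact tendsto_atBot_mono (fun x => by
      simpa [hΨ] using (abs_le.mp (hB x)).2) h₂
  obtain ⟨x, hx⟩ := hΨ₂.continuous.exists_forall_ge hlim
  refine ⟨x, ?_, ?_⟩
  · have := hx x₀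
    simp only [hΨ] at this
    nlinarith [sq_nonneg ‖x‖]
  · have hle : lapl Ψ x ≤ 0 :=
      Finset.sum_nonpos fun i _ => pdv_pdv_nonpos_of_isMax hΨ₂ hx i
    rw [hΨ, lapl_add hΦ (contDiff_const.mul hN), lapl_const_mul hN, lapl_norm_sq] at hle
    linarith

/-- Liouville's theorem for bounded harmonic functions with bounded gradient. -/
theorem pdv_eq_zero_of_bounded_of_lapl_eq_zero {g : Evec m → ℝ} (hg : ContDiff ℝ 3 g) {B : ℝ}
    (hB : ∀ x, |g x| ≤ B) {B' : ℝ} (hB' : ∀ i x, |pdv i g x| ≤ B') (hlap : ∀ x, lapl g x = 0)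
    (i : Fin m) (x₀ : Evec m) : pdv i g x₀ = 0 := by
  have hg₂ : ContDiff ℝ 2 g := hg.of_le (by norm_num)
  have hg' : ∀ j, ContDiff ℝ 2 (pdv j g) := fun j => hg.pdv (by norm_num) j
  have hlap' : ∀ j x, lapl (pdv j g) x = 0 := by
    intro j x
    have hcomm : ∀ l, pdv l (pdv l (pdv j g)) = pdv j (pdv l (pdv l g)) := by
      intro l
      rw [pdv_pdv_comm hg₂ l j, pdv_pdv_comm (hg' l) l j]
    have hz : pdv j (fun y => ∑ l, pdv l (pdv l g) y) = fun _ => 0 := by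
      have : (fun y => ∑ l, pdv l (pdv l g) y) = fun _ => (0 : ℝ) := funext hlap
      rw [this]
      funext y
      simp [pdv]
    rw [pdv_sum _ fun l _ => ((hg' l).pdv (p := 1) (by norm_num) l).differentiable
      (by norm_num)] at hz
    simpa [lapl, hcomm] using congrFun hz x
  have hsq : ∀ {h : Evec m → ℝ} {C : ℝ} {x : Evec m}, |h x| ≤ C → h x * h x ≤ C ^ 2 := by
    intro h C x hC
    rw [← sq]
    exact sq_le_sq' (abs_le.mp hC).1 (abs_le.mp hC).2
  -- the auxiliary function `|∇g|² + A g²` gives `|∇g(x₀)|² ≤ A B²`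
  have key : ∀ A : ℝ, 0 < A → pdv i g x₀ ^ 2 ≤ A * B ^ 2 := by
    intro A hA
    refine le_of_forall_pos_le_add fun δ hδ => ?_
    set Φ : Evec m → ℝ := fun x => (∑ j, pdv j g x * pdv j g x) + A * (g x * g x) with hΦ
    have hs : ContDiff ℝ 2 fun x => ∑ j, pdv j g x * pdv j g x :=
      ContDiff.sum fun j _ => (hg' j).mul (hg' j)
    have hΦ₂ : ContDiff ℝ 2 Φ := hs.add (contDiff_const.mul (hg₂.mul hg₂))
    have hΦB : ∀ x, |Φ x| ≤ m * B' ^ 2 + A * B ^ 2 := by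
      intro x
      have h₁ : 0 ≤ ∑ j, pdv j g x * pdv j g x :=
        Finset.sum_nonneg fun j _ => mul_self_nonneg _
      have h₂ : ∑ j, pdv j g x * pdv j g x ≤ m * B' ^ 2 := by
        simpa using Finset.sum_le_card_nsmul Finset.univ (fun j => pdv j g x * pdv j g x) (B' ^ 2)
          fun j _ => hsq (hB' j x)
      have h₃ : A * (g x * g x) ≤ A * B ^ 2 := mul_le_mul_of_nonneg_left (hsq (hB x)) hA.le
      have h₄ : 0 ≤ A * (g x * g x) := mul_nonneg hA.le (mul_self_nonneg _)
      rw [abs_of_nonneg (add_nonneg h₁ h₄)]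
      exact add_le_add h₂ h₃
    have hlapΦ : ∀ x, 2 * A * ∑ j, pdv j g x ^ 2 ≤ lapl Φ x := by
      intro x
      rw [hΦ, lapl_add hs (contDiff_const.mul (hg₂.mul hg₂)), lapl_const_mul (hg₂.mul hg₂),
        lapl_mul_self hg₂, lapl_sum _ fun j _ => (hg' j).mul (hg' j), hlap]
      simp only [lapl_mul_self (hg' _), hlap']
      have : 0 ≤ ∑ j, (2 * ∑ l, pdv l (pdv j g) x ^ 2 + 2 * pdv j g x * 0) :=
        Finset.sum_nonneg fun j _ => by
          have : 0 ≤ ∑ l, pdv l (pdv j g) x ^ 2 := Finset.sum_nonneg fun l _ => sq_nonneg _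
          linarith
      linarith
    set K : ℝ := m / A + ‖x₀‖ ^ 2 + 1 with hK
    have hKpos : 0 < K := by positivity
    obtain ⟨x, hx₁, hx₂⟩ := exists_lapl_le_of_bounded hΦ₂ hΦB (div_pos hδ hKpos) x₀
    have h₁ : ∑ j, pdv j g x * pdv j g x ≤ δ / K * (m / A) := by
      have := (hlapΦ x).trans hx₂
      simp only [← sq]
      have hA' : A * ∑ j, pdv j g x ^ 2 ≤ δ / K * m := by linarith
      rw [← mul_div_assoc, le_div_iff₀ hA]
      linarith
    have h₂ : A * (g x * g x) ≤ A * B ^ 2 := mul_le_mul_of_nonneg_left (hsq (hB x)) hA.le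
    have h₃ : pdv i g x₀ ^ 2 ≤ Φ x₀ := by
      have : pdv i g x₀ * pdv i g x₀ ≤ ∑ j, pdv j g x₀ * pdv j g x₀ :=
        Finset.single_le_sum (f := fun j => pdv j g x₀ * pdv j g x₀)
          (fun j _ => mul_self_nonneg _) (Finset.mem_univ i)
      have : 0 ≤ A * (g x₀ * g x₀) := mul_nonneg hA.le (mul_self_nonneg _)
      simp only [hΦ]
      linarith
    have h₄ : δ / K * K = δ := div_mul_cancel₀ _ hKpos.ne'
    have h₅ : 0 < δ / K := div_pos hδ hKpos
    have h₆ : Φ x = (∑ j, pdv j g x * pdv j g x) + A * (g x * g x) := rfl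
    rw [hK] at h₄ h₅ h₁ hx₁
    nlinarith
  have hle : pdv i g x₀ ^ 2 ≤ 0 := by
    refine le_of_forall_pos_le_add fun δ hδ => ?_
    refine (key (δ / (B ^ 2 + 1)) (by positivity)).trans ?_
    rw [div_mul_eq_mul_div, div_le_iff₀ (by positivity)]
    nlinarith
  exact pow_eq_zero_iff two_ne_zero |>.mp (le_antisymm hle (sq_nonneg _))

end Liouville

section WeylAlgebra

variable {A ι : Type*} [Ring A] [Fintype ι] {d p q : ι → A}

lemma weyl_div_mul_lapl (hdd : ∀ i j, d i * d j = d j * d i)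
    (hdp : ∀ i j, d i * p j = p j * d i) :
    (∑ i, p i * d i) * (∑ j, d j * d j) = (∑ j, d j * d j) * ∑ i, p i * d i := by
  have hdd' : ∀ i j, Commute (d i) (d j) := hdd
  have hdp' : ∀ i j, Commute (d i) (p j) := hdp
  refine Commute.sum_left _ _ _ fun i _ => Commute.sum_right _ _ _ fun j _ => ?_
  exact ((hdp' j i).symm.mul_right (hdp' j i).symm).mul_left ((hdd' i j).mul_right (hdd' i j))

lemma weyl_div_mul_grad [DecidableEq ι] (hdd : ∀ i j, d i * d j = d j * d i)
    (hdp : ∀ i j, d i * p j = p j * d i) (hdq : ∀ i j, d i * q j = q j * d i)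
    (hpq : ∀ i j, p i * q j = q j * p i + if i = j then 1 else 0) :
    (∑ i, p i * d i) * (∑ j, q j * d j)
      = (∑ j, q j * d j) * (∑ i, p i * d i) + ∑ j, d j * d j := by
  have key : ∀ i j, p i * d i * (q j * d j)
      = q j * d j * (p i * d i) + if i = j then d i * d j else 0 := by
    intro i j
    calc p i * d i * (q j * d j) = p i * (d i * q j) * d j := by noncomm_ring
      _ = (p i * q j) * d i * d j := by rw [hdq]; noncomm_ring
      _ = q j * p i * (d i * d j) + if i = j then d i * d j else 0 := by
        rw [hpq]; split_ifs <;> noncomm_ring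
      _ = q j * (p i * d j) * d i + if i = j then d i * d j else 0 := by
        rw [hdd i j]; noncomm_ring
      _ = q j * d j * (p i * d i) + if i = j then d i * d j else 0 := by
        rw [← hdp]; noncomm_ring
  simp only [Finset.sum_mul_sum, key, Finset.sum_add_distrib, Finset.sum_ite_eq,
    Finset.mem_univ, if_true]
  rw [Finset.sum_comm]

lemma weyl_div_mul_normSq [DecidableEq ι] (hdq : ∀ i j, d i * q j = q j * d i)
    (hpq : ∀ i j, p i * q j = q j * p i + if i = j then 1 else 0) :
    (∑ i, p i * d i) * (∑ j, q j * q j)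
      = (∑ j, q j * q j) * (∑ i, p i * d i) + 2 * ∑ j, q j * d j := by
  have key : ∀ i j, p i * d i * (q j * q j)
      = q j * q j * (p i * d i) + if i = j then 2 * (q j * d i) else 0 := by
    intro i j
    calc p i * d i * (q j * q j) = p i * (d i * q j) * q j := by noncomm_ring
      _ = p i * (q j * d i) * q j := by rw [hdq]
      _ = p i * q j * (d i * q j) := by noncomm_ring
      _ = (p i * q j) * q j * d i := by rw [hdq, mul_assoc (p i * q j)]
      _ = (q j * p i + if i = j then 1 else 0) * q j * d i := by rw [hpq]
      _ = q j * (p i * q j) * d i + (if i = j then 1 else 0) * q j * d i := by noncomm_ring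
      _ = q j * (q j * p i + if i = j then 1 else 0) * d i
          + (if i = j then 1 else 0) * q j * d i := by rw [hpq]
      _ = q j * q j * (p i * d i) + if i = j then 2 * (q j * d i) else 0 := by
        split_ifs <;> noncomm_ring
  rw [Finset.mul_sum _ _ (2 : A)]
  simp only [Finset.sum_mul_sum, key, Finset.sum_add_distrib, Finset.sum_ite_eq,
    Finset.mem_univ, if_true]
  rw [Finset.sum_comm]

end WeylAlgebra

section DivergenceHierarchy

/-- Applying powers of the divergence `D` to an equation `ΔT - α X D T + β |u|² D² T = 0`. -/
lemma divergence_hierarchy {W : Type*} [AddCommGroup W] [Module ℝ W]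
    {D X Δ L : Module.End ℝ W} (hΔ : D * Δ = Δ * D) (hX : D * X = X * D + Δ)
    (hL : D * L = L * D + 2 * X) {N β : ℝ} {T : W}
    (hT : Δ T - (β * (N - 1)) • X (D T) + β • L (D (D T)) = 0) (j : ℕ) :
    (1 - β * (j * (N - j))) • Δ ((D ^ j) T) - (β * (N - 1 - 2 * j)) • X ((D ^ (j + 1)) T)
      + β • L ((D ^ (j + 2)) T) = 0 := by
  have hΔ' : ∀ S, D (Δ S) = Δ (D S) := fun S => LinearMap.congr_fun hΔ S
  have hX' : ∀ S, D (X S) = X (D S) + Δ S := fun S => LinearMap.congr_fun hX S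
  have hL' : ∀ S, D (L S) = L (D S) + (2 : ℝ) • X S := fun S => by
    have := LinearMap.congr_fun hL S
    rw [two_smul]
    simpa [two_mul] using this
  have hpow : ∀ n, (D ^ (n + 1)) T = D ((D ^ n) T) := fun n => by rw [pow_succ']; rfl
  induction j with
  | zero => simpa [hpow] using hT
  | succ j ih =>
    have h := congrArg D ih
    simp only [map_add, map_sub, map_smul, map_zero, hpow, hΔ', hX', hL'] at h ⊢
    rw [← h]
    push_cast
    module

end DivergenceHierarchy

section TestFunctions

open scoped ContDiff
open MvPolynomial

variable {m : ℕ}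

/-- Smooth compactly supported functions on `ℝ^m`. -/
def testFnSubmodule (m : ℕ) : Submodule ℝ (Evec m → ℝ) where
  carrier := {φ | ContDiff ℝ ∞ φ ∧ HasCompactSupport φ}
  add_mem' h₁ h₂ := ⟨h₁.1.add h₂.1, h₁.2.add h₂.2⟩
  zero_mem' := ⟨contDiff_const, HasCompactSupport.zero⟩
  smul_mem' c _ h := ⟨contDiff_const.smul h.1, h.2.smul_left (f := fun _ => c)⟩

/-- Smooth compactly supported functions on `ℝ^m`, as a type. -/
abbrev TestFn (m : ℕ) : Type := testFnSubmodule m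

namespace TestFn

lemma contDiff (φ : TestFn m) : ContDiff ℝ ∞ φ.1 := φ.2.1

lemma hasCompactSupport (φ : TestFn m) : HasCompactSupport φ.1 := φ.2.2

lemma differentiable (φ : TestFn m) : Differentiable ℝ φ.1 := φ.contDiff.differentiable (by simp)

/-- Partial derivative of a test function. -/
def pd (i : Fin m) : TestFn m →ₗ[ℝ] TestFn m where
  toFun φ := ⟨pdv i φ.1, φ.contDiff.pdv (by simp) i,
    φ.hasCompactSupport.fderiv_apply (𝕜 := ℝ) (EuclideanSpace.single i 1)⟩
  map_add' φ ψ := Subtype.ext (pdv_add φ.differentiable ψ.differentiable i)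
  map_smul' c φ := Subtype.ext (pdv_const_mul φ.differentiable c i)

/-- Translation of a test function. -/
def translate (x : Evec m) (φ : TestFn m) : TestFn m :=
  ⟨fun t => φ.1 (t + x), φ.contDiff.comp (contDiff_id.add contDiff_const),
    φ.hasCompactSupport.comp_homeomorph (Homeomorph.addRight x)⟩

lemma pd_comm (i j : Fin m) (φ : TestFn m) : pd i (pd j φ) = pd j (pd i φ) :=
  Subtype.ext (pdv_pdv_comm (by exact_mod_cast contDiff_infty.mp φ.contDiff 2) i j)

lemma pd_translate (i : Fin m) (x : Evec m) (φ : TestFn m) :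
    pd i (translate x φ) = translate x (pd i φ) := by
  refine Subtype.ext (funext fun t => ?_)
  change fderiv ℝ (fun s => φ.1 (s + x)) t _ = fderiv ℝ φ.1 (t + x) _
  rw [fderiv_comp_add_right]

lemma translate_zero (φ : TestFn m) : translate 0 φ = φ :=
  Subtype.ext (funext fun t => by simp [translate])

end TestFn

/-- Polynomial-valued distributions on `ℝ^m` (without any continuity requirement). -/
abbrev PolyDistr (m : ℕ) : Type := TestFn m →ₗ[ℝ] MvPolynomial (Fin m) ℝ

namespace PolyDistr

/-- The operator `∂_{x_i}`. -/
def dx (i : Fin m) : Module.End ℝ (PolyDistr m) := LinearMap.lcomp ℝ _ (TestFn.pd i)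

/-- The operator `∂_{u_i}`. -/
def du (i : Fin m) : Module.End ℝ (PolyDistr m) :=
  LinearMap.compRight ℝ (pderiv i : Derivation ℝ (MvPolynomial (Fin m) ℝ) _).toLinearMap

/-- Multiplication by `u_i`. -/
def mulU (i : Fin m) : Module.End ℝ (PolyDistr m) :=
  LinearMap.compRight ℝ (LinearMap.mulLeft ℝ (X i : MvPolynomial (Fin m) ℝ))

lemma dx_apply (i : Fin m) (S : PolyDistr m) (φ : TestFn m) : dx i S φ = S (TestFn.pd i φ) := rfl

lemma du_apply (i : Fin m) (S : PolyDistr m) (φ : TestFn m) : du i S φ = pderiv i (S φ) := rfl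

lemma mulU_apply (i : Fin m) (S : PolyDistr m) (φ : TestFn m) : mulU i S φ = X i * S φ := rfl

lemma dx_mul_dx (i j : Fin m) : (dx i * dx j : Module.End ℝ (PolyDistr m)) = dx j * dx i :=
  LinearMap.ext fun S => LinearMap.ext fun φ => congrArg S (TestFn.pd_comm j i φ)

lemma du_mul_mulU (i j : Fin m) : (du i * mulU j : Module.End ℝ (PolyDistr m))
    = mulU j * du i + if i = j then 1 else 0 := by
  refine LinearMap.ext fun S => LinearMap.ext fun φ => ?_
  by_cases h : i = j
  · subst h
    simp [du_apply, mulU_apply, add_comm]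
  · simp [du_apply, mulU_apply, h, pderiv_X_of_ne (Ne.symm h)]

/-- The divergence-type operator `∑ ∂_{u_i} ∂_{x_i}`. -/
def divU (m : ℕ) : Module.End ℝ (PolyDistr m) := ∑ i, du i * dx i

/-- The operator `∑ u_i ∂_{x_i}`. -/
def gradU (m : ℕ) : Module.End ℝ (PolyDistr m) := ∑ i, mulU i * dx i

/-- The Laplacian in `x`. -/
def laplX (m : ℕ) : Module.End ℝ (PolyDistr m) := ∑ i, dx i * dx i

/-- Multiplication by `|u|²`. -/
def normSqU (m : ℕ) : Module.End ℝ (PolyDistr m) := ∑ i, mulU i * mulU i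

/-- All regularizations of `S` are smooth and bounded. -/
def IsBounded (S : PolyDistr m) : Prop :=
  ∀ (l : MvPolynomial (Fin m) ℝ →ₗ[ℝ] ℝ) (φ : TestFn m),
    ContDiff ℝ ∞ (fun x => l (S (φ.translate x))) ∧
    (∃ B : ℝ, ∀ x, |l (S (φ.translate x))| ≤ B) ∧
    ∀ i x, pdv i (fun x => l (S (φ.translate x))) x = l (S ((TestFn.pd i φ).translate x))

lemma IsBounded.sum {ι : Type*} {s : Finset ι} {S : ι → PolyDistr m}
    (h : ∀ a ∈ s, IsBounded (S a)) : IsBounded (∑ a ∈ s, S a) := by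
  intro l φ
  simp only [LinearMap.sum_apply, map_sum]
  refine ⟨ContDiff.sum fun a ha => (h a ha l φ).1, ?_, fun i x => ?_⟩
  · have h' : ∀ a, ∃ B : ℝ, a ∈ s → ∀ x, |l (S a (φ.translate x))| ≤ B := by
      intro a
      by_cases ha : a ∈ s
      · obtain ⟨B, hB⟩ := (h a ha l φ).2.1
        exact ⟨B, fun _ => hB⟩
      · exact ⟨0, fun h => absurd h ha⟩
    choose B hB using h'
    exact ⟨∑ a ∈ s, B a, fun x => (Finset.abs_sum_le_sum_abs _ _).trans
      (Finset.sum_le_sum fun a ha => hB a ha x)⟩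
  · rw [pdv_sum s fun a ha => (h a ha l φ).1.differentiable (by simp)]
    exact Finset.sum_congr rfl fun a ha => (h a ha l φ).2.2 i x

lemma IsBounded.du {S : PolyDistr m} (h : IsBounded S) (i : Fin m) : IsBounded (du i S) :=
  fun l φ => h (l ∘ₗ (pderiv i : Derivation ℝ (MvPolynomial (Fin m) ℝ) _).toLinearMap) φ

lemma IsBounded.dx {S : PolyDistr m} (h : IsBounded S) (i : Fin m) : IsBounded (dx i S) := by
  intro l φ
  simp only [dx_apply, TestFn.pd_translate, TestFn.pd_comm i]
  exact h l (TestFn.pd i φ)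

lemma IsBounded.divU_pow {S : PolyDistr m} (h : IsBounded S) (j : ℕ) :
    IsBounded ((divU m ^ j) S) := by
  induction j with
  | zero => exact h
  | succ j ih =>
    rw [pow_succ', Module.End.mul_apply, divU, LinearMap.sum_apply]
    exact IsBounded.sum fun i _ => (ih.dx i).du i

/-- Liouville's theorem for polynomial-valued distributions. -/
lemma IsBounded.dx_eq_zero {S : PolyDistr m} (h : IsBounded S) (hlap : laplX m S = 0)
    (i : Fin m) : PolyDistr.dx i S = 0 := by
  refine LinearMap.ext fun φ => MvPolynomial.ext _ _ fun a => ?_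
  set l : MvPolynomial (Fin m) ℝ →ₗ[ℝ] ℝ := lcoeff ℝ a
  have hpd : ∀ (j : Fin m) (ψ : TestFn m), pdv j (fun x => l (S (ψ.translate x)))
      = fun x => l (S ((TestFn.pd j ψ).translate x)) := fun j ψ => funext ((h l ψ).2.2 j)
  obtain ⟨B, hB⟩ := (h l φ).2.1
  have hB₁ : ∀ j, ∃ B : ℝ, ∀ x, |l (S ((TestFn.pd j φ).translate x))| ≤ B :=
    fun j => (h l (TestFn.pd j φ)).2.1
  choose B₁ hB₁ using hB₁
  have hzero := pdv_eq_zero_of_bounded_of_lapl_eq_zero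
    (g := fun x => l (S (φ.translate x))) (by exact_mod_cast contDiff_infty.mp (h l φ).1 3) hB
    (B' := ∑ j, |B₁ j|) (fun j x => by
      rw [hpd]
      exact (hB₁ j x).trans ((le_abs_self _).trans
        (Finset.single_le_sum (f := fun j => |B₁ j|) (fun _ _ => abs_nonneg _)
          (Finset.mem_univ j))))
    (fun x => by
      have := LinearMap.congr_fun hlap (φ.translate x)
      simp only [laplX, LinearMap.sum_apply, Module.End.mul_apply, dx_apply,
        TestFn.pd_translate] at this
      simp only [lapl, hpd, ← map_sum, this]
      simp) i 0
  rw [hpd] at hzero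
  simpa [TestFn.translate_zero, dx_apply, l] using hzero

lemma divU_pow_apply_isHomogeneous {S : PolyDistr m} {k : ℕ} (h : ∀ φ, (S φ).IsHomogeneous k)
    (j : ℕ) (φ : TestFn m) : (((divU m ^ j) S) φ).IsHomogeneous (k - j) := by
  induction j generalizing φ with
  | zero => exact h φ
  | succ j ih =>
    rw [pow_succ', Module.End.mul_apply, divU, LinearMap.sum_apply, LinearMap.sum_apply]
    exact IsHomogeneous.sum _ _ _ fun i _ => (ih (TestFn.pd i φ)).pderiv

lemma divU_pow_succ_eq_zero {S : PolyDistr m} {k : ℕ} (h : ∀ φ, (S φ).IsHomogeneous k) :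
    (divU m ^ (k + 1)) S = 0 := by
  refine LinearMap.ext fun φ => ?_
  rw [pow_succ', Module.End.mul_apply, divU, LinearMap.sum_apply, LinearMap.sum_apply]
  refine Finset.sum_eq_zero fun i _ => ?_
  have h₀ := divU_pow_apply_isHomogeneous h k (TestFn.pd i φ)
  rw [Nat.sub_self, ← totalDegree_zero_iff_isHomogeneous, totalDegree_eq_zero_iff_eq_C] at h₀
  change pderiv i (((divU m ^ k) S) (TestFn.pd i φ)) = 0
  rw [h₀, pderiv_C]

/-- A bounded distributional null solution of the bosonic Laplacian is constant in `x`. -/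
theorem dx_eq_zero_of_bosonic {k : ℕ} (hm : 4 < m) {T : PolyDistr m}
    (hhom : ∀ φ, (T φ).IsHomogeneous k) (hbdd : IsBounded T)
    (hT : laplX m T - (4 / ((m : ℝ) + 2 * k - 2)) • gradU m (divU m T)
      + (4 / (((m : ℝ) + 2 * k - 2) * ((m : ℝ) + 2 * k - 4))) • normSqU m (divU m (divU m T)) = 0)
    (i : Fin m) : dx i T = 0 := by
  have hm' : (5 : ℝ) ≤ m := by exact_mod_cast hm
  have hk' : (0 : ℝ) ≤ k := k.cast_nonneg
  have h₂ : (0 : ℝ) < (m : ℝ) + 2 * k - 2 := by linarith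
  have h₄ : (0 : ℝ) < (m : ℝ) + 2 * k - 4 := by linarith
  set β : ℝ := 4 / (((m : ℝ) + 2 * k - 2) * ((m : ℝ) + 2 * k - 4)) with hβ
  have hα : 4 / ((m : ℝ) + 2 * k - 2) = β * (((m : ℝ) + 2 * k - 3) - 1) := by
    rw [hβ]
    field_simp
    ring
  rw [hα] at hT
  have hdu : ∀ i j : Fin m, dx i * du j = du j * dx i := fun _ _ => rfl
  have hmu : ∀ i j : Fin m, dx i * mulU j = mulU j * dx i := fun _ _ => rfl
  have hier := divergence_hierarchy (weyl_div_mul_lapl dx_mul_dx hdu)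
    (weyl_div_mul_grad dx_mul_dx hdu hmu du_mul_mulU)
    (weyl_div_mul_normSq hmu du_mul_mulU) hT
  have hdiv : ∀ S : PolyDistr m, (∀ i, dx i S = 0) → divU m S = 0 := fun S hS => by
    simp [divU, LinearMap.sum_apply, Module.End.mul_apply, hS]
  have hstep : ∀ n, n ≤ k + 1 → ∀ i, dx i ((divU m ^ (k + 1 - n)) T) = 0 := by
    intro n
    induction n with
    | zero => intro _ i; simp [divU_pow_succ_eq_zero hhom]
    | succ n ih =>
      intro hn
      obtain ⟨j, hj⟩ : ∃ j, k = n + j := ⟨k - n, by omega⟩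
      have hj₁ : k + 1 - n = j + 1 := by omega
      have hj₂ : k + 1 - (n + 1) = j := by omega
      have ih' := ih (by omega)
      rw [hj₁] at ih'
      rw [hj₂]
      have hX : gradU m ((divU m ^ (j + 1)) T) = 0 := by
        simp [gradU, LinearMap.sum_apply, Module.End.mul_apply, ih']
      have hD : (divU m ^ (j + 2)) T = 0 := by
        rw [pow_succ', Module.End.mul_apply]
        exact hdiv _ ih'
      have heq := hier j
      change _ • laplX m ((divU m ^ j) T) - _ • gradU m ((divU m ^ (j + 1)) T)
        + _ • normSqU m ((divU m ^ (j + 2)) T) = 0 at heq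
      rw [hX, hD, map_zero, smul_zero, smul_zero, sub_zero, add_zero] at heq
      have hne : 1 - β * ((j : ℝ) * (((m : ℝ) + 2 * k - 3) - j)) ≠ 0 := by
        have hkj : (k : ℝ) = n + j := by exact_mod_cast hj
        have hn' : (0 : ℝ) ≤ n := n.cast_nonneg
        have : 1 - β * ((j : ℝ) * (((m : ℝ) + 2 * k - 3) - j))
            = (2 * n + m - 2) * (2 * n + m - 4)
              / (((m : ℝ) + 2 * k - 2) * ((m : ℝ) + 2 * k - 4)) := by
          rw [hβ, eq_div_iff (mul_pos h₂ h₄).ne', sub_mul, mul_right_comm,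
            div_mul_cancel₀ _ (mul_pos h₂ h₄).ne', hkj]
          ring
        rw [this]
        exact (div_pos (mul_pos (by linarith) (by linarith)) (mul_pos h₂ h₄)).ne'
      exact (hbdd.divU_pow j).dx_eq_zero ((smul_eq_zero_iff_right hne).mp heq)
  simpa using hstep (k + 1) le_rfl i

end PolyDistr

end TestFunctions

section PolynomialFunctions

open MvPolynomial

variable {m : ℕ}

lemma MvPolynomial.eq_zero_of_eval_ball {P : MvPolynomial (Fin m) ℝ}
    (h : ∀ u ∈ ball (0 : Evec m) 1, eval (fun i => u i) P = 0) : P = 0 := by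
  have hcont : Continuous fun v : Fin m → ℝ => (WithLp.toLp 2 v : Evec m) :=
    PiLp.continuous_toLp 2 _
  have hnhds : (fun v : Fin m → ℝ => (WithLp.toLp 2 v : Evec m)) ⁻¹' ball 0 1 ∈ 𝓝 0 :=
    hcont.continuousAt.preimage_mem_nhds (ball_mem_nhds _ one_pos)
  obtain ⟨δ, hδ, hsub⟩ := Metric.mem_nhds_iff.mp hnhds
  refine funext_set (fun _ => Set.Ioo (-δ) δ) (fun _ => Set.Ioo_infinite (by linarith)) ?_
  intro v hv
  have hv' : v ∈ ball (0 : Fin m → ℝ) δ := by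
    rw [mem_ball_zero_iff, pi_norm_lt_iff hδ]
    intro i
    rw [Real.norm_eq_abs, abs_lt]
    exact hv i (Set.mem_univ i)
  simpa using h _ (hsub hv')

lemma MvPolynomial.IsHomogeneous.eval_smul {P : MvPolynomial (Fin m) ℝ} {n : ℕ}
    (hP : P.IsHomogeneous n) (c : ℝ) (v : Fin m → ℝ) :
    eval (fun i => c * v i) P = c ^ n * eval v P := by
  simp only [eval_eq', Finset.mul_sum]
  refine Finset.sum_congr rfl fun d hd => ?_
  have hdeg : ∑ i, d i = n := by
    rw [← hP (mem_support_iff.mp hd), ← Finsupp.degree_eq_sum, Finsupp.degree_eq_weight_one]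
    rfl
  rw [← hdeg, ← Finset.prod_pow_eq_pow_sum]
  simp only [mul_pow, Finset.prod_mul_distrib]
  ring

lemma IsHk.exists_isHomogeneous {k : ℕ} {q : Evec m → ℝ} (h : IsHk m k q) :
    ∃ P : MvPolynomial (Fin m) ℝ, P.IsHomogeneous k ∧ ∀ x, q x = eval (fun i => x i) P := by
  obtain ⟨⟨P, hP⟩, hhom, -⟩ := h
  refine ⟨homogeneousComponent k P, homogeneousComponent_isHomogeneous k P, fun x => ?_⟩
  set R : Polynomial ℝ := ∑ n ∈ Finset.range (P.totalDegree + 1),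
    Polynomial.C (eval (fun i => x i) (homogeneousComponent n P)) * Polynomial.X ^ n with hR
  have hRq : R = Polynomial.C (q x) * Polynomial.X ^ k := by
    refine Polynomial.funext fun c => ?_
    have hc := hhom c x
    rw [hP (c • x)] at hc
    nth_rewrite 1 [← sum_homogeneousComponent P] at hc
    have hscale : ∀ n, eval (fun i => (c • x) i) (homogeneousComponent n P)
        = c ^ n * eval (fun i => x i) (homogeneousComponent n P) := fun n =>
      (homogeneousComponent_isHomogeneous n P).eval_smul c fun i => x i
    simp only [map_sum, hscale] at hc
    simp only [hR, Polynomial.eval_finsetSum, Polynomial.eval_mul, Polynomial.eval_C,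
      Polynomial.eval_pow, Polynomial.eval_X]
    rw [mul_comm (q x), ← hc]
    exact Finset.sum_congr rfl fun n _ => mul_comm _ _
  have hk := congrArg (fun p => Polynomial.coeff p k) hRq
  simp only [hR, Polynomial.finsetSum_coeff, Polynomial.coeff_C_mul_X_pow] at hk
  by_cases hkd : k ∈ Finset.range (P.totalDegree + 1)
  · simpa [Finset.sum_ite_eq, hkd] using hk.symm
  · rw [homogeneousComponent_eq_zero _ _ (by simpa using hkd)]
    simpa [Finset.sum_ite_eq, hkd] using hk.symm

lemma contDiff_eval {n : WithTop ℕ∞} (P : MvPolynomial (Fin m) ℝ) :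
    ContDiff ℝ n fun u : Evec m => eval (fun i => u i) P := by
  induction P using MvPolynomial.induction_on with
  | C a => simpa using contDiff_const
  | add p q hp hq => simpa using hp.add hq
  | mul_X p i hp =>
    simp only [map_mul, eval_X]
    exact hp.mul (by fun_prop)

lemma pdv_eval (i : Fin m) (P : MvPolynomial (Fin m) ℝ) :
    pdv i (fun u : Evec m => eval (fun i => u i) P) = fun u => eval (fun i => u i) (pderiv i P) := by
  have hd : ∀ P : MvPolynomial (Fin m) ℝ,
      Differentiable ℝ fun u : Evec m => eval (fun i => u i) P :=
    fun P => (contDiff_eval (n := 1) P).differentiable (by norm_num)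
  induction P using MvPolynomial.induction_on with
  | C a => funext u; simp [pdv]
  | add p q hp hq => simp only [map_add, pdv_add (hd p) (hd q), hp, hq]
  | mul_X p j hp =>
    have hX : pdv i (fun u : Evec m => u j) = fun _ => if i = j then 1 else 0 := by
      funext u
      have : (fun u : Evec m => u j) = (EuclideanSpace.proj j : Evec m →L[ℝ] ℝ) := rfl
      rw [pdv, this, ContinuousLinearMap.fderiv]
      simp [eq_comm]
    simp only [map_mul, eval_X]
    rw [pdv_mul (hd p) (by fun_prop), hp, hX]
    funext u
    simp only [Derivation.leibniz, smul_eq_mul, map_add, map_mul, eval_X, pderiv_X, Pi.single_apply]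
    by_cases h : i = j
    · simp [h]
    · simp [h, Ne.symm h]

end PolynomialFunctions

section Coefficients

open MvPolynomial

variable {m : ℕ} {ι : Type*} [Fintype ι] {F : Evec m → Evec m → ℝ} {c : ι → Evec m → ℝ}
  {Q : ι → MvPolynomial (Fin m) ℝ}

lemma pd1_eq_sum (hF : ∀ x, ∀ u ∈ ball (0 : Evec m) 1,
      F x u = ∑ b, c b x * eval (fun i => u i) (Q b))
    (hc : ∀ b, Differentiable ℝ (c b)) (i : Fin m) :
    ∀ x, ∀ u ∈ ball (0 : Evec m) 1,
      pd1 i F x u = ∑ b, pdv i (c b) x * eval (fun i => u i) (Q b) := by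
  intro x u hu
  change pdv i (fun x₁ => F x₁ u) x = _
  simp only [hF _ u hu, mul_comm (c _ _)]
  rw [pdv_sum _ fun b _ => (hc b).const_mul _]
  refine Finset.sum_congr rfl fun b _ => ?_
  rw [pdv_const_mul (hc b), mul_comm]

lemma pd2_eq_sum (hF : ∀ x, ∀ u ∈ ball (0 : Evec m) 1,
      F x u = ∑ b, c b x * eval (fun i => u i) (Q b)) (i : Fin m) :
    ∀ x, ∀ u ∈ ball (0 : Evec m) 1,
      pd2 i F x u = ∑ b, c b x * eval (fun i => u i) (pderiv i (Q b)) := by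
  intro x u hu
  have heq : (fun u₁ => F x u₁) =ᶠ[𝓝 u] fun u₁ => ∑ b, c b x * eval (fun i => u₁ i) (Q b) := by
    filter_upwards [isOpen_ball.mem_nhds hu] with v hv using hF x v hv
  have hd : ∀ b, Differentiable ℝ fun u : Evec m => eval (fun i => u i) (Q b) :=
    fun b => (contDiff_eval (n := 1) (Q b)).differentiable (by norm_num)
  rw [pd2, heq.fderiv_eq]
  change pdv i (fun u₁ : Evec m => ∑ b, c b x * eval (fun i => u₁ i) (Q b)) u = _
  rw [pdv_sum _ fun b _ => (hd b).const_mul _]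
  refine Finset.sum_congr rfl fun b _ => ?_
  rw [pdv_const_mul (hd b), pdv_eval]

/-- A bounded `C²` function with values in `ℋ_k` has bounded `C²` coefficients with respect to
a basis of the homogeneous polynomials of degree `k`. -/
lemma C2Hk.exists_coefficients {k : ℕ} {f : Evec m → Evec m → ℝ} (hreg : C2Hk m k Set.univ f)
    {M : ℝ} (hbdd : ∀ x ν : Evec m, ‖ν‖ < 1 → |f x ν| ≤ M) :
    ∃ (n : ℕ) (Q : Fin n → MvPolynomial (Fin m) ℝ) (c : Fin n → Evec m → ℝ),
      LinearIndependent ℝ Q ∧ (∀ b, (Q b).IsHomogeneous k) ∧ (∀ b, ContDiff ℝ 2 (c b)) ∧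
      (∀ b, ∃ B : ℝ, ∀ x, |c b x| ≤ B) ∧
      ∀ x, ∀ u ∈ ball (0 : Evec m) 1, f x u = ∑ b, c b x * eval (fun i => u i) (Q b) := by
  have hrep : ∀ x, ∃ P : homogeneousSubmodule (Fin m) ℝ k,
      ∀ u ∈ ball (0 : Evec m) 1, f x u = eval (fun i => u i) P.1 := by
    intro x
    obtain ⟨q, hq, hfq⟩ := hreg.2 x (Set.mem_univ x)
    obtain ⟨P, hP, hqP⟩ := hq.exists_isHomogeneous
    exact ⟨⟨P, hP⟩, fun u hu => (hfq u (ball_subset_closedBall hu)).trans (hqP u)⟩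
  choose P hP using hrep
  have : Module.Finite ℝ (homogeneousSubmodule (Fin m) ℝ k) :=
    Module.Finite.iff_fg.mpr (homogeneousSubmodule_fg _ _ k)
  let bas := Module.finBasis ℝ (homogeneousSubmodule (Fin m) ℝ k)
  let ev : ball (0 : Evec m) 1 → homogeneousSubmodule (Fin m) ℝ k →ₗ[ℝ] ℝ := fun u =>
    (aeval (fun i => u.1 i) : MvPolynomial (Fin m) ℝ →ₐ[ℝ] ℝ).toLinearMap ∘ₗ Submodule.subtype _
  have hev : ∀ u p, ev u p = eval (fun i => u.1 i) p.1 := fun u p => by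
    simp [ev, aeval_eq_eval]
  have hker : ⨅ u, LinearMap.ker (ev u) = ⊥ := by
    refine (Submodule.eq_bot_iff _).mpr fun p hp => Subtype.ext (eq_zero_of_eval_ball fun u hu => ?_)
    rw [← hev ⟨u, hu⟩ p]
    exact (Submodule.mem_iInf _).mp hp ⟨u, hu⟩
  have hl : ∀ l : homogeneousSubmodule (Fin m) ℝ k →ₗ[ℝ] ℝ,
      ContDiff ℝ 2 (fun x => l (P x)) ∧ ∃ B : ℝ, ∀ x, |l (P x)| ≤ B := by
    intro l
    have hmem : l ∈ Submodule.span ℝ (Set.range ev) :=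
      FiniteDimensional.mem_span_of_iInf_ker_le_ker (by rw [hker]; exact bot_le)
    induction hmem using Submodule.span_induction with
    | mem l hl =>
      obtain ⟨u, rfl⟩ := hl
      have heq : (fun x => ev u (P x)) = fun x => f x u.1 :=
        funext fun x => by rw [hev, hP x u.1 u.2]
      refine ⟨?_, M, fun x => ?_⟩
      · rw [heq, ← contDiffOn_univ]
        exact hreg.1.comp (contDiff_id.prodMk contDiff_const).contDiffOn
          fun x _ => ⟨Set.mem_univ _, u.2⟩
      · rw [congrFun heq x]
        exact hbdd x u.1 (mem_ball_zero_iff.mp u.2)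
    | zero => exact ⟨contDiff_const, 0, by simp⟩
    | add l₁ l₂ _ _ h₁ h₂ =>
      obtain ⟨B₁, hB₁⟩ := h₁.2
      obtain ⟨B₂, hB₂⟩ := h₂.2
      exact ⟨h₁.1.add h₂.1, B₁ + B₂,
        fun x => (abs_add_le _ _).trans (add_le_add (hB₁ x) (hB₂ x))⟩
    | smul a l _ h =>
      obtain ⟨B, hB⟩ := h.2
      refine ⟨contDiff_const.mul h.1, |a| * B, fun x => ?_⟩
      rw [LinearMap.smul_apply, smul_eq_mul, abs_mul]
      exact mul_le_mul_of_nonneg_left (hB x) (abs_nonneg a)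
  refine ⟨_, fun b => (bas b).1, fun b x => bas.repr (P x) b, ?_, fun b => (bas b).2,
    fun b => (hl (bas.coord b)).1, fun b => (hl (bas.coord b)).2, fun x u hu => ?_⟩
  · exact bas.linearIndependent.map' (Submodule.subtype _) (Submodule.ker_subtype _)
  · have hsum := congrArg (ev ⟨u, hu⟩) (bas.sum_repr (P x))
    rw [map_sum, hev] at hsum
    rw [hP x u hu, ← hsum]
    simp [hev]

end Coefficients

section Pairing

open scoped ContDiff Convolution
open MvPolynomial

variable {m : ℕ}

lemma integrable_mul_testFn_neg {c : Evec m → ℝ} (hc : Continuous c) (φ : TestFn m) :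
    Integrable fun t => c t * φ.1 (-t) := by
  refine (hc.mul (φ.contDiff.continuous.comp continuous_neg)).integrable_of_hasCompactSupport ?_
  exact (φ.hasCompactSupport.comp_homeomorph (Homeomorph.neg (Evec m))).mul_left

/-- The pairing `∫ c(t) φ(-t) dt` of a continuous function with a test function. -/
def reflPairing (m : ℕ) : C(Evec m, ℝ) →ₗ[ℝ] TestFn m →ₗ[ℝ] ℝ :=
  LinearMap.mk₂ ℝ (fun c φ => ∫ t, c t * φ.1 (-t))
    (fun c d φ => by
      simp only [ContinuousMap.add_apply, add_mul]
      exact integral_add (integrable_mul_testFn_neg c.continuous φ)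
        (integrable_mul_testFn_neg d.continuous φ))
    (fun a c φ => by
      simp only [ContinuousMap.smul_apply, smul_eq_mul, mul_assoc]
      exact integral_const_mul _ _)
    (fun c φ ψ => by
      simp only [Submodule.coe_add, Pi.add_apply, mul_add]
      exact integral_add (integrable_mul_testFn_neg c.continuous φ)
        (integrable_mul_testFn_neg c.continuous ψ))
    (fun a c φ => by
      simp only [Submodule.coe_smul, Pi.smul_apply, smul_eq_mul, mul_left_comm _ a]
      exact integral_const_mul _ _)

lemma reflPairing_apply (c : C(Evec m, ℝ)) (φ : TestFn m) :
    reflPairing m c φ = ∫ t, c t * φ.1 (-t) := rfl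

lemma reflPairing_pd {c d : C(Evec m, ℝ)} (hc : ContDiff ℝ 1 c) {i : Fin m}
    (hd : ⇑d = pdv i c) (φ : TestFn m) :
    reflPairing m c (TestFn.pd i φ) = reflPairing m d φ := by
  have hfd : ∀ t, fderiv ℝ (fun s => φ.1 (-s)) t (EuclideanSpace.single i 1)
      = -(TestFn.pd i φ).1 (-t) := by
    intro t
    have hneg := (φ.differentiable (-t)).hasFDerivAt.comp t (hasFDerivAt_id t).fun_neg
    change fderiv ℝ (φ.1 ∘ fun s => -s) t _ = _
    erw [hneg.fderiv]
    simp [TestFn.pd, pdv]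
  have hint := integral_mul_fderiv_eq_neg_fderiv_mul_of_integrable (μ := volume)
    (f := c) (g := fun t => φ.1 (-t)) (v := EuclideanSpace.single i (1 : ℝ))
    (by
      have := integrable_mul_testFn_neg d.continuous φ
      rwa [hd] at this)
    (by
      simp only [hfd, mul_neg]
      exact (integrable_mul_testFn_neg c.continuous (TestFn.pd i φ)).neg)
    (integrable_mul_testFn_neg c.continuous φ)
    (fun t _ => hc.differentiable (by norm_num) t)
    (fun t _ => (φ.differentiable.comp differentiable_id.fun_neg) t)
  simp only [hfd, mul_neg, integral_neg, neg_inj] at hint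
  rw [reflPairing_apply, reflPairing_apply, hint, hd]
  rfl

lemma reflPairing_translate (c : C(Evec m, ℝ)) (φ : TestFn m) (x : Evec m) :
    reflPairing m c (φ.translate x)
      = (⇑c ⋆[ContinuousLinearMap.mul ℝ ℝ, volume] φ.1) x := by
  rw [reflPairing_apply, convolution_def]
  refine integral_congr_ae (Eventually.of_forall fun t => ?_)
  simp [TestFn.translate, neg_add_eq_sub]

lemma isBounded_reflPairing_smulRight (c : C(Evec m, ℝ)) {B : ℝ} (hB : ∀ x, |c x| ≤ B)
    (P : MvPolynomial (Fin m) ℝ) :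
    PolyDistr.IsBounded ((reflPairing m c).smulRight P) := by
  intro l φ
  have hloc : LocallyIntegrable c (volume : Measure (Evec m)) := c.continuous.locallyIntegrable
  have hfun : ∀ ψ : TestFn m, (fun x => l ((reflPairing m c).smulRight P (ψ.translate x)))
      = fun x => l P * (⇑c ⋆[ContinuousLinearMap.mul ℝ ℝ, volume] ψ.1) x := fun ψ => by
    funext x
    rw [LinearMap.smulRight_apply, map_smul, reflPairing_translate, smul_eq_mul, mul_comm]
  have hsmooth : ContDiff ℝ ∞ (⇑c ⋆[ContinuousLinearMap.mul ℝ ℝ, volume] φ.1) :=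
    φ.hasCompactSupport.contDiff_convolution_right _ hloc φ.contDiff
  refine ⟨?_, ⟨|l P| * (B * ∫ t, |φ.1 t|), fun x => ?_⟩, fun i x => ?_⟩
  · rw [hfun]
    exact contDiff_const.mul hsmooth
  · rw [congrFun (hfun φ) x, abs_mul]
    refine mul_le_mul_of_nonneg_left ?_ (abs_nonneg _)
    have hφ : Integrable fun t => |φ.1 t| :=
      (φ.contDiff.continuous.integrable_of_hasCompactSupport φ.hasCompactSupport).abs
    rw [convolution_def, ← integral_sub_left_eq_self (fun t => |φ.1 t|) volume x,
      ← integral_const_mul, ← Real.norm_eq_abs]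
    refine norm_integral_le_of_norm_le ((hφ.comp_sub_left x).const_mul B)
      (Eventually.of_forall fun t => ?_)
    rw [ContinuousLinearMap.mul_apply', Real.norm_eq_abs, abs_mul]
    exact mul_le_mul_of_nonneg_right (hB t) (abs_nonneg _)
  · rw [hfun, congrFun (hfun _) x, pdv_const_mul (hsmooth.differentiable (by simp))]
    refine congrArg (l P * ·) ?_
    have hder := φ.hasCompactSupport.hasFDerivAt_convolution_right
      (ContinuousLinearMap.mul ℝ ℝ) hloc (φ.contDiff.of_le (by simp)) x
    change fderiv ℝ (⇑c ⋆[ContinuousLinearMap.mul ℝ ℝ, volume] φ.1) x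
      (EuclideanSpace.single i 1) = _
    rw [hder.fderiv, convolution_precompR_apply _ hloc
      (φ.hasCompactSupport.fderiv (𝕜 := ℝ)) (φ.contDiff.continuous_fderiv (by simp))]
    rfl

lemma eq_zero_of_reflPairing_eq_zero {c : C(Evec m, ℝ)} (h : ∀ φ, reflPairing m c φ = 0) :
    c = 0 := by
  have hae : ∀ᵐ x ∂(volume : Measure (Evec m)), c x = 0 := by
    refine ae_eq_zero_of_integral_contDiff_smul_eq_zero c.continuous.locallyIntegrable
      fun g hg hgs => ?_
    have := h ⟨fun t => g (-t), hg.comp contDiff_neg,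
      hgs.comp_homeomorph (Homeomorph.neg (Evec m))⟩
    rw [reflPairing_apply] at this
    simpa [mul_comm] using this
  have heq := Continuous.ae_eq_iff_eq volume c.continuous continuous_zero |>.mp hae
  exact ContinuousMap.ext (congrFun heq)

end Pairing

section Liouville

open MvPolynomial

variable {m : ℕ}

lemma bosonic_reflPairing_eq_zero {ι : Type*} [Fintype ι] {k : ℕ} {f : Evec m → Evec m → ℝ}
    {c : ι → C(Evec m, ℝ)} (hc : ∀ b, ContDiff ℝ 2 (c b)) {Q : ι → MvPolynomial (Fin m) ℝ}
    (hf : ∀ x, ∀ u ∈ ball (0 : Evec m) 1, f x u = ∑ b, c b x * eval (fun i => u i) (Q b))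
    (hD : ∀ x : Evec m, ∀ ν ∈ ball (0 : Evec m) 1, Dk m k f x ν = 0) {T : PolyDistr m}
    (hT : T = ∑ b, (reflPairing m (c b)).smulRight (Q b)) :
    PolyDistr.laplX m T - (4 / ((m : ℝ) + 2 * k - 2)) • PolyDistr.gradU m (PolyDistr.divU m T)
      + (4 / (((m : ℝ) + 2 * k - 2) * ((m : ℝ) + 2 * k - 4))) •
        PolyDistr.normSqU m (PolyDistr.divU m (PolyDistr.divU m T)) = 0 := by
  have hc₁ : ∀ b i, ContDiff ℝ 1 (pdv i (c b)) := fun b i => (hc b).pdv (by norm_num) i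
  let c₁ : ι → Fin m → C(Evec m, ℝ) := fun b i => ⟨pdv i (c b), (hc₁ b i).continuous⟩
  let c₂ : ι → Fin m → Fin m → C(Evec m, ℝ) := fun b i j =>
    ⟨pdv i (pdv j (c b)), ((hc₁ b j).pdv (p := 0) (by norm_num) i).continuous⟩
  have hpair : ∀ b i j φ, reflPairing m (c b) (TestFn.pd j (TestFn.pd i φ))
      = reflPairing m (c₂ b i j) φ := fun b i j φ => by
    rw [reflPairing_pd (d := c₁ b j) ((hc b).of_le (by norm_num)) rfl,
      reflPairing_pd (d := c₂ b i j) (hc₁ b j) rfl]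
  have hdiff : ∀ b, Differentiable ℝ (c b) := fun b => (hc b).differentiable (by norm_num)
  have hdiff₁ : ∀ b i, Differentiable ℝ (pdv i (c b)) :=
    fun b i => (hc₁ b i).differentiable (by norm_num)
  refine LinearMap.ext fun φ => eq_zero_of_eval_ball fun u hu => ?_
  have hcoef : (∑ i, ∑ b, eval (fun i => u i) (Q b) • c₂ b i i)
      - (4 / ((m : ℝ) + 2 * k - 2)) •
        ∑ i, ∑ j, u i • ∑ b, eval (fun i => u i) (pderiv j (Q b)) • c₂ b i j
      + (4 * ‖u‖ ^ 2 / (((m : ℝ) + 2 * k - 2) * ((m : ℝ) + 2 * k - 4))) •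
        ∑ i, ∑ j, ∑ b, eval (fun i => u i) (pderiv i (pderiv j (Q b))) • c₂ b i j = 0 := by
    refine ContinuousMap.ext fun x => ?_
    have h₁ := fun i => pd1_eq_sum hf hdiff i
    have h₁₁ := fun i j => pd1_eq_sum (h₁ i) (fun b => hdiff₁ b i) j
    have h₂₁ := fun i j => pd2_eq_sum (h₁ i) j
    have h₁₂₁ := fun i j l => pd1_eq_sum (h₂₁ i j) (fun b => hdiff₁ b i) l
    have h₂₁₂₁ := fun i j l n => pd2_eq_sum (h₁₂₁ i j l) n
    have hDx := hD x u hu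
    simp only [Dk, h₁₁ _ _ x u hu, h₁₂₁ _ _ _ x u hu, h₂₁₂₁ _ _ _ _ x u hu] at hDx
    simpa [c₂, mul_comm] using hDx
  have happ := congrArg (fun d => reflPairing m d φ) hcoef
  simp only [map_add, map_sub, map_smul, map_sum, map_zero, LinearMap.add_apply,
    LinearMap.sub_apply, LinearMap.smul_apply, LinearMap.sum_apply, LinearMap.zero_apply,
    smul_eq_mul] at happ
  rw [← happ, hT]
  simp [PolyDistr.laplX, PolyDistr.gradU, PolyDistr.normSqU, PolyDistr.divU,
    PolyDistr.dx_apply, PolyDistr.du_apply, PolyDistr.mulU_apply, hpair,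
    EuclideanSpace.real_norm_sq_eq, smul_eval]
  congr 1
  · congr 1
    · rw [Finset.sum_comm]
      exact Finset.sum_congr rfl fun _ _ => Finset.sum_congr rfl fun _ _ => mul_comm _ _
    · congr 1
      conv_rhs => rw [Finset.sum_comm]
      rw [Finset.sum_comm]
      refine Finset.sum_congr rfl fun j _ => ?_
      rw [Finset.sum_comm]
      refine Finset.sum_congr rfl fun i _ => ?_
      rw [Finset.mul_sum]
      exact Finset.sum_congr rfl fun b _ => by ring
  · rw [mul_div_right_comm, mul_assoc]
    congr 1
    conv_rhs => rw [Finset.sum_comm]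
    rw [Finset.sum_comm, Finset.mul_sum]
    refine Finset.sum_congr rfl fun j _ => ?_
    rw [Finset.sum_comm, Finset.mul_sum]
    refine Finset.sum_congr rfl fun i _ => ?_
    rw [Finset.mul_sum]
    refine Finset.sum_congr rfl fun b _ => ?_
    rw [Finset.sum_mul]
    exact Finset.sum_congr rfl fun l _ => by ring

end Liouville

/-- Liouville-type theorem for bounded null solutions of the bosonic
Laplacian, `m > 4`. -/
theorem stmt_17 (m k : ℕ) (hm : 4 < m) (hk : 1 ≤ k)
    (f : Evec m → Evec m → ℝ)
    (hreg : C2Hk m k Set.univ f)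
    (hbdd : ∃ M : ℝ, ∀ x ν : Evec m, ‖ν‖ < 1 → |f x ν| ≤ M)
    (hD : ∀ x : Evec m, ∀ ν ∈ ball (0 : Evec m) 1, Dk m k f x ν = 0) :
    ∀ x ν : Evec m, ‖ν‖ < 1 → f x ν = f 0 ν := by
  obtain ⟨M, hM⟩ := hbdd
  obtain ⟨n, Q, c, hQ, hQhom, hc, hcb, hf⟩ := hreg.exists_coefficients hM
  let C₀ : Fin n → C(Evec m, ℝ) := fun b => ⟨c b, (hc b).continuous⟩
  set T : PolyDistr m := ∑ b, (reflPairing m (C₀ b)).smulRight (Q b) with hT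
  have hTφ : ∀ φ, T φ = ∑ b, reflPairing m (C₀ b) φ • Q b := fun φ => by
    simp [hT]
  have hdx : ∀ i, PolyDistr.dx i T = 0 := by
    refine PolyDistr.dx_eq_zero_of_bosonic hm (k := k) (fun φ => ?_) ?_
      (bosonic_reflPairing_eq_zero (c := C₀) hc hf hD hT)
    · rw [hTφ]
      exact MvPolynomial.IsHomogeneous.sum _ _ _ fun b _ =>
        (MvPolynomial.homogeneousSubmodule (Fin m) ℝ k).smul_mem _ (hQhom b)
    · refine PolyDistr.IsBounded.sum fun b _ => ?_
      obtain ⟨B, hB⟩ := hcb b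
      exact isBounded_reflPairing_smulRight (C₀ b) hB (Q b)
  have hpdv : ∀ b i, pdv i (c b) = 0 := by
    intro b i
    have hc₁ : ContDiff ℝ 1 (pdv i (c b)) := (hc b).pdv (by norm_num) i
    have hzero : (⟨pdv i (c b), hc₁.continuous⟩ : C(Evec m, ℝ)) = 0 := by
      refine eq_zero_of_reflPairing_eq_zero fun φ => ?_
      rw [← reflPairing_pd (c := C₀ b) ((hc b).of_le (by norm_num)) rfl]
      have hφ := LinearMap.congr_fun (hdx i) φ
      rw [PolyDistr.dx_apply, hTφ] at hφ
      exact Fintype.linearIndependent_iff.mp hQ _ hφ b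
    exact congrArg DFunLike.coe hzero
  have hconst : ∀ b x, c b x = c b 0 := by
    intro b x
    refine is_const_of_fderiv_eq_zero (𝕜 := ℝ) ((hc b).differentiable (by norm_num))
      (fun y => ?_) x 0
    refine ContinuousLinearMap.coe_injective
      ((EuclideanSpace.basisFun (Fin m) ℝ).toBasis.ext fun i => ?_)
    simpa [pdv] using congrFun (hpdv b i) y
  intro x ν hν
  rw [hf x ν (mem_ball_zero_iff.mpr hν), hf 0 ν (mem_ball_zero_iff.mpr hν)]
  simp only [hconst _ x]
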